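/- The group G presented by ⟨t₁, x₁, x₂, ξ | t₁² = 1, t₁ x₁ t₁⁻¹ = x₁⁻¹, t₁ x₂ t₁⁻¹ = x₂, [t₁, ξ] = 1, ξ x₁ ξ⁻¹ = x₁, ξ x₂ ξ⁻¹ = x₂⁻¹⟩ is isomorphic to the amalgamated free product L₁ *_L L₂, where L₁ = ⟨x₂, t₁, ξ⟩ ≅ ℤ/2ℤ × (ℤ ⋊ ℤ) (ℤ/2ℤ generated by t₁, and the Klein bottle group generated by x₂, ξ), L₂ = ⟨x₁, t₁, ξ⟩ ≅ ℤ × D∞, and L = ⟨t₁, ξ⟩ ≅ ℤ/2ℤ × ℤ. -/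

import Mathlib

namespace Stmt19

/-- A two-member family of groups indexed by `Bool`. -/
def Fam (L₁ L₂ : Type u) : Bool → Type u := fun b => cond b L₁ L₂

instance (L₁ L₂ : Type u) [Group L₁] [Group L₂] : ∀ b, Group (Fam L₁ L₂ b)
  | true => ‹Group L₁›
  | false => ‹Group L₂›

/-- Generators: `0 = t₁`, `1 = x₁`, `2 = x₂`, `3 = ξ`. -/
abbrev t₁ : FreeGroup (Fin 4) := FreeGroup.of 0
abbrev x₁ : FreeGroup (Fin 4) := FreeGroup.of 1
abbrev x₂ : FreeGroup (Fin 4) := FreeGroup.of 2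
abbrev ξ : FreeGroup (Fin 4) := FreeGroup.of 3

/-- Relators of `⟨t₁, x₁, x₂, ξ | t₁² = 1, t₁x₁t₁⁻¹ = x₁⁻¹, t₁x₂t₁⁻¹ = x₂, [t₁, ξ] = 1,
ξx₁ξ⁻¹ = x₁, ξx₂ξ⁻¹ = x₂⁻¹⟩`. -/
def rels : Set (FreeGroup (Fin 4)) :=
  {t₁ ^ 2, t₁ * x₁ * t₁⁻¹ * x₁, t₁ * x₂ * t₁⁻¹ * x₂⁻¹, t₁ * ξ * t₁⁻¹ * ξ⁻¹,
   ξ * x₁ * ξ⁻¹ * x₁⁻¹, ξ * x₂ * ξ⁻¹ * x₂}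

/-- The Klein bottle group `ℤ ⋊ ℤ` (generator acting by negation). -/
abbrev KleinBottle :=
  SemidirectProduct (Multiplicative ℤ) (Multiplicative ℤ)
    (zpowersHom (MulAut (Multiplicative ℤ)) (MulEquiv.inv (Multiplicative ℤ)))

/-- `L₁ = ℤ/2ℤ × (ℤ ⋊ ℤ)`. -/
abbrev L₁ := Multiplicative (ZMod 2) × KleinBottle
/-- `L₂ = ℤ × D∞`. -/
abbrev L₂ := Multiplicative ℤ × DihedralGroup 0
/-- `L = ℤ/2ℤ × ℤ`. -/
abbrev L := Multiplicative (ZMod 2) × Multiplicative ℤ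

/-! Both groups have the same universal property. A homomorphism out of `L₁` is a triple
`(t, y, s)` with `t² = 1`, `s y s⁻¹ = y⁻¹` and `t` commuting with `y` and `s`; one out of `L₂` is a
triple `(t, x, s)` with `t² = 1`, `t x t⁻¹ = x⁻¹` and `s` commuting with `t` and `x`. Agreement on
`L` means that the two pairs `(t, s)` coincide, and the conditions on the two triples together are
then exactly the six relations of the presentation. -/

universe u

section Lifts

variable {K : Type*} [Group K] {n : ℕ}

/-- The homomorphism out of `ℤ/nℤ`, written multiplicatively, sending the generator to `x`. -/
def zmodLift (x : K) (hx : x ^ n = 1) : Multiplicative (ZMod n) →* K :=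
  AddMonoidHom.toMultiplicativeLeft
    (ZMod.lift n ⟨zmultiplesHom (Additive K) (.ofMul x), by simpa using congrArg Additive.ofMul hx⟩)

theorem zmodLift_ofAdd_intCast (x : K) (hx : x ^ n = 1) (k : ℤ) :
    zmodLift x hx (.ofAdd (k : ZMod n)) = x ^ k :=
  congrArg Additive.toMul (ZMod.lift_coe n _ k)

@[simp]
theorem zmodLift_ofAdd_one (x : K) (hx : x ^ n = 1) : zmodLift x hx (.ofAdd 1) = x := by
  simpa using zmodLift_ofAdd_intCast x hx 1

theorem zmodLift_injective {x : K} (hx : orderOf x = n) :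
    Function.Injective (zmodLift x (hx ▸ pow_orderOf_eq_one x)) :=
  (injective_iff_map_eq_one _).2 fun i hi => by
    obtain ⟨k, rfl⟩ := ZMod.intCast_surjective i
    have hk : x ^ k = 1 := (zmodLift_ofAdd_intCast x _ k).symm.trans hi
    exact (ZMod.intCast_zmod_eq_zero_iff_dvd k n).2 (hx ▸ orderOf_dvd_iff_zpow_eq_one.2 hk)

theorem zmod_hom_ext {M : Type*} [Monoid M] {f g : Multiplicative (ZMod n) →* M}
    (h : f (.ofAdd 1) = g (.ofAdd 1)) : f = g := by
  have hsurj : Function.Surjective (AddMonoidHom.toMultiplicative (Int.castAddHom (ZMod n))) :=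
    ZMod.intCast_surjective
  exact (MonoidHom.cancel_right hsurj).1 (MonoidHom.ext_mint (by simpa using h))

theorem commute_zmodLift {x z : K} (hx : x ^ n = 1) (h : Commute z x)
    (i : Multiplicative (ZMod n)) : Commute z (zmodLift x hx i) := by
  obtain ⟨k, rfl⟩ := ZMod.intCast_surjective i
  exact (zmodLift_ofAdd_intCast x hx k).symm ▸ h.zpow_right k

theorem semiconjBy_zmodLift {t x : K} (hx : x ^ n = 1) (h : t * x * t⁻¹ = x⁻¹) (i : ZMod n) :
    SemiconjBy t (zmodLift x hx (.ofAdd i)) (zmodLift x hx (.ofAdd (-i))) := by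
  obtain ⟨k, rfl⟩ := ZMod.intCast_surjective i
  rw [← Int.cast_neg, zmodLift_ofAdd_intCast, zmodLift_ofAdd_intCast, zpow_neg, ← inv_zpow]
  exact SemiconjBy.zpow_right (mul_inv_eq_iff_eq_mul.1 h) k

/-- The homomorphism out of the dihedral group of order `2 * n` (infinite if `n = 0`) sending the
rotation `r 1` to `x` and the reflection `sr 0` to `t`. -/
def dihedralLift (x t : K) (hx : x ^ n = 1) (ht : t ^ 2 = 1) (h : t * x * t⁻¹ = x⁻¹) :
    DihedralGroup n →* K :=
  MonoidHom.mk'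
    (fun
      | .r i => zmodLift x hx (.ofAdd i)
      | .sr i => t * zmodLift x hx (.ofAdd i)) <| by
    have hsub (i j : ZMod n) : zmodLift x hx (.ofAdd (j - i)) =
        zmodLift x hx (.ofAdd (-i)) * zmodLift x hx (.ofAdd j) := by
      rw [sub_eq_neg_add, ofAdd_add, map_mul]
    have hswap (i : ZMod n) : zmodLift x hx (.ofAdd i) * t = t * zmodLift x hx (.ofAdd (-i)) := by
      simpa using (semiconjBy_zmodLift hx h (-i)).eq.symm
    rintro (i | i) (j | j)
    · simp only [DihedralGroup.r_mul_r, ofAdd_add, map_mul]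
    · simp only [DihedralGroup.r_mul_sr, hsub, ← mul_assoc, hswap]
    · simp only [DihedralGroup.sr_mul_r, ofAdd_add, map_mul, mul_assoc]
    · simp only [DihedralGroup.sr_mul_sr, hsub, ← mul_assoc, mul_assoc t _ t, hswap]
      rw [← pow_two, ht, one_mul]

@[simp]
theorem dihedralLift_r_one (x t : K) (hx : x ^ n = 1) (ht : t ^ 2 = 1) (h : t * x * t⁻¹ = x⁻¹) :
    dihedralLift x t hx ht h (.r 1) = x :=
  zmodLift_ofAdd_one x hx

@[simp]
theorem dihedralLift_sr_zero (x t : K) (hx : x ^ n = 1) (ht : t ^ 2 = 1)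
    (h : t * x * t⁻¹ = x⁻¹) : dihedralLift x t hx ht h (.sr 0) = t :=
  (congrArg (t * ·) (map_one (zmodLift x hx))).trans (mul_one t)

theorem commute_dihedralLift {x t z : K} (hx : x ^ n = 1) (ht : t ^ 2 = 1)
    (h : t * x * t⁻¹ = x⁻¹) (hzx : Commute z x) (hzt : Commute z t) :
    ∀ d, Commute z (dihedralLift x t hx ht h d)
  | .r i => commute_zmodLift hx hzx i
  | .sr i => hzt.mul_right (commute_zmodLift hx hzx i)

theorem dihedral_hom_ext {f g : DihedralGroup n →* K} (hr : f (.r 1) = g (.r 1))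
    (hs : f (.sr 0) = g (.sr 0)) : f = g := by
  have rotation (i : ZMod n) : f (.r i) = g (.r i) := by
    obtain ⟨k, rfl⟩ := ZMod.intCast_surjective i
    rw [← DihedralGroup.r_one_zpow, map_zpow, map_zpow, hr]
  ext (i | i)
  · exact rotation i
  · have hsr : DihedralGroup.sr i = .sr 0 * .r i := by rw [DihedralGroup.sr_mul_r, zero_add]
    rw [hsr, map_mul, map_mul, hs, rotation]

theorem comp_mulAut_eq_conj_comp_of_closure_eq_top {N G : Type*} [MulOneClass N] [Group G]
    {φ : G →* MulAut N} {fn : N →* K} {fg : G →* K} {S : Set G} (hS : Subgroup.closure S = ⊤)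
    (h : ∀ g ∈ S, fn.comp (φ g).toMonoidHom = (MulAut.conj (fg g)).toMonoidHom.comp fn) (g : G) :
    fn.comp (φ g).toMonoidHom = (MulAut.conj (fg g)).toMonoidHom.comp fn := by
  suffices ∀ n, fn (φ g n) = fg g * fn n * (fg g)⁻¹ from MonoidHom.ext this
  have hg : g ∈ Subgroup.closure S := hS ▸ Subgroup.mem_top g
  induction hg using Subgroup.closure_induction with
  | mem a ha => exact DFunLike.congr_fun (h a ha)
  | one => simp
  | mul a b _ _ ha hb =>
    intro n
    simp only [map_mul, MulAut.mul_apply, ha, hb, mul_inv_rev, mul_assoc]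
  | inv a _ ha =>
    intro n
    have fn_eq : fn n = fg a * fn ((φ a)⁻¹ n) * (fg a)⁻¹ := by
      rw [← ha, MulAut.apply_inv_self]
    rw [map_inv, map_inv, fn_eq]
    group

theorem closure_ofAdd_one : Subgroup.closure {Multiplicative.ofAdd (1 : ℤ)} = ⊤ := by
  rw [← Subgroup.zpowers_eq_closure, Subgroup.eq_top_iff']
  exact fun i => ⟨i.toAdd, by simp [← Int.ofAdd_mul]⟩

/-- The homomorphism out of the Klein bottle group `⟨a, s | s a s⁻¹ = a⁻¹⟩` given by two elements
satisfying its relation. -/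
def KleinBottle.lift (a s : K) (h : s * a * s⁻¹ = a⁻¹) : KleinBottle →* K :=
  SemidirectProduct.lift (zpowersHom K a) (zpowersHom K s) <|
    comp_mulAut_eq_conj_comp_of_closure_eq_top closure_ofAdd_one <| by
      rintro _ rfl
      exact MonoidHom.ext_mint (by simpa using h.symm)

@[simp]
theorem KleinBottle.lift_inl (a s : K) (h : s * a * s⁻¹ = a⁻¹) (i : Multiplicative ℤ) :
    KleinBottle.lift a s h (.inl i) = a ^ i.toAdd :=
  SemidirectProduct.lift_inl ..

@[simp]
theorem KleinBottle.lift_inr (a s : K) (h : s * a * s⁻¹ = a⁻¹) (i : Multiplicative ℤ) :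
    KleinBottle.lift a s h (.inr i) = s ^ i.toAdd :=
  SemidirectProduct.lift_inr ..

theorem KleinBottle.commute_lift {a s z : K} (h : s * a * s⁻¹ = a⁻¹) (hza : Commute z a)
    (hzs : Commute z s) (k : KleinBottle) : Commute z (KleinBottle.lift a s h k) :=
  (hza.zpow_right _).mul_right (hzs.zpow_right _)

theorem prod_hom_ext {M N P : Type*} [MulOneClass M] [MulOneClass N] [MulOneClass P]
    {f g : M × N →* P} (hl : f.comp (.inl M N) = g.comp (.inl M N))
    (hr : f.comp (.inr M N) = g.comp (.inr M N)) : f = g := by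
  ext ⟨m, n⟩
  rw [← Prod.fst_mul_snd (m, n), map_mul, map_mul]
  exact congrArg₂ (· * ·) (DFunLike.congr_fun hl m) (DFunLike.congr_fun hr n)

end Lifts

section Amalgam

variable {A B : Type u} {H K : Type*} [Group A] [Group B] [Monoid H] [Monoid K]

/-- Two homomorphisms with common domain as a family indexed by `Bool`. -/
def famHom (i₁ : H →* A) (i₂ : H →* B) : ∀ b, H →* Fam A B b
  | true => i₁
  | false => i₂

theorem famHom_injective {i₁ : H →* A} {i₂ : H →* B} (h₁ : Function.Injective i₁)
    (h₂ : Function.Injective i₂) : ∀ b, Function.Injective (famHom i₁ i₂ b)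
  | true => h₁
  | false => h₂

/-- The pushout of two groups `A` and `B` along homomorphisms from `H`; the amalgamated free product
`A *_H B` when both are injective. -/
abbrev Amalgam (i₁ : H →* A) (i₂ : H →* B) := Monoid.PushoutI (famHom i₁ i₂)

namespace Amalgam

variable (i₁ : H →* A) (i₂ : H →* B)

/-- The canonical map `A → A *_H B`. -/
def inl : A →* Amalgam i₁ i₂ := Monoid.PushoutI.of (φ := famHom i₁ i₂) true

/-- The canonical map `B → A *_H B`. -/
def inr : B →* Amalgam i₁ i₂ := Monoid.PushoutI.of (φ := famHom i₁ i₂) false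

theorem inl_apply_eq_inr_apply (y : H) : inl i₁ i₂ (i₁ y) = inr i₁ i₂ (i₂ y) :=
  (Monoid.PushoutI.of_apply_eq_base (famHom i₁ i₂) true y).trans
    (Monoid.PushoutI.of_apply_eq_base (famHom i₁ i₂) false y).symm

variable {i₁ i₂}

/-- The homomorphism out of `A *_H B` given by homomorphisms out of `A` and `B` agreeing on `H`. -/
def lift (f₁ : A →* K) (f₂ : B →* K) (h : f₁.comp i₁ = f₂.comp i₂) : Amalgam i₁ i₂ →* K :=
  Monoid.PushoutI.lift (fun | true => f₁ | false => f₂) (f₁.comp i₁)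
    (fun | true => rfl | false => h.symm)

@[simp]
theorem lift_inl (f₁ : A →* K) (f₂ : B →* K) (h : f₁.comp i₁ = f₂.comp i₂) (a : A) :
    lift f₁ f₂ h (inl i₁ i₂ a) = f₁ a :=
  Monoid.PushoutI.lift_of (φ := famHom i₁ i₂) (i := true) ..

@[simp]
theorem lift_inr (f₁ : A →* K) (f₂ : B →* K) (h : f₁.comp i₁ = f₂.comp i₂) (b : B) :
    lift f₁ f₂ h (inr i₁ i₂ b) = f₂ b :=
  Monoid.PushoutI.lift_of (φ := famHom i₁ i₂) (i := false) ..

theorem hom_ext {f g : Amalgam i₁ i₂ →* K} (hl : f.comp (inl i₁ i₂) = g.comp (inl i₁ i₂))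
    (hr : f.comp (inr i₁ i₂) = g.comp (inr i₁ i₂)) : f = g :=
  Monoid.PushoutI.hom_ext_nonempty fun | true => hl | false => hr

end Amalgam

end Amalgam

section Factors

variable {K : Type*} [Group K]

/-- The generator `t₁` of `L`. -/
def L.t₁ : L := (.ofAdd 1, 1)

/-- The generator `ξ` of `L`. -/
def L.ξ : L := (1, .ofAdd 1)

/-- The generator `t₁` of `L₁`. -/
def L₁.t₁ : L₁ := (.ofAdd 1, 1)

/-- The generator `x₂` of `L₁`. -/
def L₁.x₂ : L₁ := (1, .inl (.ofAdd 1))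

/-- The generator `ξ` of `L₁`. -/
def L₁.ξ : L₁ := (1, .inr (.ofAdd 1))

/-- The generator `t₁` of `L₂`. -/
def L₂.t₁ : L₂ := (1, .sr 0)

/-- The generator `x₁` of `L₂`. -/
def L₂.x₁ : L₂ := (1, .r 1)

/-- The generator `ξ` of `L₂`. -/
def L₂.ξ : L₂ := (.ofAdd 1, 1)

theorem L.hom_ext {f g : L →* K} (ht : f L.t₁ = g L.t₁) (hs : f L.ξ = g L.ξ) : f = g :=
  prod_hom_ext (zmod_hom_ext ht) (MonoidHom.ext_mint hs)

theorem L₁.hom_ext {f g : L₁ →* K} (ht : f L₁.t₁ = g L₁.t₁) (hy : f L₁.x₂ = g L₁.x₂)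
    (hs : f L₁.ξ = g L₁.ξ) : f = g :=
  prod_hom_ext (zmod_hom_ext ht)
    (SemidirectProduct.hom_ext (MonoidHom.ext_mint hy) (MonoidHom.ext_mint hs))

theorem L₂.hom_ext {f g : L₂ →* K} (ht : f L₂.t₁ = g L₂.t₁) (hx : f L₂.x₁ = g L₂.x₁)
    (hs : f L₂.ξ = g L₂.ξ) : f = g :=
  prod_hom_ext (MonoidHom.ext_mint hs) (dihedral_hom_ext hx ht)

/-- The homomorphism out of `L₁` sending `t₁`, `x₂`, `ξ` to `t`, `y`, `s`. -/
def L₁.lift {t y s : K} (ht : t ^ 2 = 1) (hty : Commute t y) (hts : Commute t s)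
    (hsy : s * y * s⁻¹ = y⁻¹) : L₁ →* K :=
  (zmodLift t ht).noncommCoprod (KleinBottle.lift y s hsy) fun i k =>
    (commute_zmodLift ht (KleinBottle.commute_lift hsy hty hts k).symm i).symm

/-- The homomorphism out of `L₂` sending `t₁`, `x₁`, `ξ` to `t`, `x`, `s`. -/
def L₂.lift {t x s : K} (ht : t ^ 2 = 1) (htx : t * x * t⁻¹ = x⁻¹) (hts : Commute t s)
    (hsx : Commute s x) : L₂ →* K :=
  (zpowersHom K s).noncommCoprod (dihedralLift x t (pow_zero x) ht htx) fun _ d =>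
    (commute_dihedralLift (pow_zero x) ht htx hsx hts.symm d).zpow_left _

section Values

variable {t x y s : K} (ht : t ^ 2 = 1) (htx : t * x * t⁻¹ = x⁻¹) (hty : Commute t y)
  (hts : Commute t s) (hsx : Commute s x) (hsy : s * y * s⁻¹ = y⁻¹)

theorem L₁.lift_apply (p : L₁) :
    L₁.lift ht hty hts hsy p = zmodLift t ht p.1 * KleinBottle.lift y s hsy p.2 := rfl

theorem L₂.lift_apply (p : L₂) :
    L₂.lift ht htx hts hsx p = s ^ p.1.toAdd * dihedralLift x t (pow_zero x) ht htx p.2 := rfl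

@[simp]
theorem L₁.lift_t₁ : L₁.lift ht hty hts hsy L₁.t₁ = t := by simp [L₁.lift_apply, L₁.t₁]

@[simp]
theorem L₁.lift_x₂ : L₁.lift ht hty hts hsy L₁.x₂ = y := by simp [L₁.lift_apply, L₁.x₂]

@[simp]
theorem L₁.lift_ξ : L₁.lift ht hty hts hsy L₁.ξ = s := by simp [L₁.lift_apply, L₁.ξ]

@[simp]
theorem L₂.lift_t₁ : L₂.lift ht htx hts hsx L₂.t₁ = t := by simp [L₂.lift_apply, L₂.t₁]

@[simp]
theorem L₂.lift_x₁ : L₂.lift ht htx hts hsx L₂.x₁ = x := by simp [L₂.lift_apply, L₂.x₁]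

@[simp]
theorem L₂.lift_ξ : L₂.lift ht htx hts hsx L₂.ξ = s := by simp [L₂.lift_apply, L₂.ξ]

end Values

end Factors

/-- The embedding of `L` in `L₁` with `t₁ ↦ t₁` and `ξ ↦ ξ`. -/
def incl₁ : L →* L₁ := (MonoidHom.id _).prodMap SemidirectProduct.inr

/-- The embedding of `L` in `L₂` with `t₁ ↦ t₁` and `ξ ↦ ξ`. -/
def incl₂ : L →* L₂ :=
  ((MonoidHom.id _).prodMap
    (zmodLift (.sr 0) ((pow_two _).trans (DihedralGroup.sr_mul_self 0)))).comp
    MulEquiv.prodComm.toMonoidHom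

theorem incl₁_injective : Function.Injective incl₁ :=
  Function.injective_id.prodMap SemidirectProduct.inr_injective

theorem incl₂_injective : Function.Injective incl₂ :=
  (Function.injective_id.prodMap (zmodLift_injective (DihedralGroup.orderOf_sr 0))).comp
    MulEquiv.prodComm.injective

@[simp]
theorem incl₁_t₁ : incl₁ L.t₁ = L₁.t₁ := rfl

@[simp]
theorem incl₁_ξ : incl₁ L.ξ = L₁.ξ := rfl

@[simp]
theorem incl₂_t₁ : incl₂ L.t₁ = L₂.t₁ := rfl

@[simp]
theorem incl₂_ξ : incl₂ L.ξ = L₂.ξ := rfl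

/-- The defining relations of the presented group, for elements `t`, `x`, `y`, `s` of a group in the
roles of `t₁`, `x₁`, `x₂`, `ξ`. -/
structure SatisfiesRels {K : Type*} [Group K] (t x y s : K) : Prop where
  t_sq : t ^ 2 = 1
  t_conj_x : t * x * t⁻¹ = x⁻¹
  t_comm_y : Commute t y
  t_comm_s : Commute t s
  s_comm_x : Commute s x
  s_conj_y : s * y * s⁻¹ = y⁻¹

section Comparison

variable {K : Type*} [Group K]

theorem forall_rels_lift_eq_one_iff {g : Fin 4 → K} :
    (∀ r ∈ rels, FreeGroup.lift g r = 1) ↔ SatisfiesRels (g 0) (g 1) (g 2) (g 3) := by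
  have commute_iff (a b : K) : a * b * a⁻¹ * b⁻¹ = 1 ↔ Commute a b := by
    rw [mul_inv_eq_one, mul_inv_eq_iff_eq_mul, Commute, SemiconjBy]
  simp only [rels, Set.forall_mem_insert, Set.mem_singleton_iff, forall_eq, map_mul, map_pow,
    map_inv, FreeGroup.lift_apply_of, commute_iff, mul_eq_one_iff_eq_inv]
  exact ⟨fun ⟨h₁, h₂, h₃, h₄, h₅, h₆⟩ => ⟨h₁, h₂, h₃, h₄, h₅, h₆⟩,
    fun ⟨h₁, h₂, h₃, h₄, h₅, h₆⟩ => ⟨h₁, h₂, h₃, h₄, h₅, h₆⟩⟩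

theorem satisfiesRels_of :
    SatisfiesRels (.of 0 : PresentedGroup rels) (.of 1) (.of 2) (.of 3) :=
  forall_rels_lift_eq_one_iff.1 fun r hr => by
    have lift_of : FreeGroup.lift PresentedGroup.of = PresentedGroup.mk rels :=
      FreeGroup.ext_hom _ _ fun _ => FreeGroup.lift_apply_of
    rw [lift_of, PresentedGroup.one_of_mem hr]

local notation "ι₁" => Amalgam.inl incl₁ incl₂
local notation "ι₂" => Amalgam.inr incl₁ incl₂

theorem inl_t₁_eq_inr_t₁ : ι₁ L₁.t₁ = ι₂ L₂.t₁ := by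
  simpa using Amalgam.inl_apply_eq_inr_apply incl₁ incl₂ L.t₁

theorem inl_ξ_eq_inr_ξ : ι₁ L₁.ξ = ι₂ L₂.ξ := by
  simpa using Amalgam.inl_apply_eq_inr_apply incl₁ incl₂ L.ξ

theorem satisfiesRels_amalgam :
    SatisfiesRels (ι₁ L₁.t₁) (ι₂ L₂.x₁) (ι₁ L₁.x₂) (ι₁ L₁.ξ) where
  t_sq := by
    have h : L₁.t₁ ^ 2 = 1 := rfl
    simp [← map_pow, h]
  t_conj_x := by
    have h : L₂.t₁ * L₂.x₁ * L₂.t₁⁻¹ = L₂.x₁⁻¹ := rfl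
    simp only [inl_t₁_eq_inr_t₁, ← map_mul, ← map_inv, h]
  t_comm_y := Commute.map (show L₁.t₁ * L₁.x₂ = L₁.x₂ * L₁.t₁ from rfl) ι₁
  t_comm_s := Commute.map (show L₁.t₁ * L₁.ξ = L₁.ξ * L₁.t₁ from rfl) ι₁
  s_comm_x := by
    rw [inl_ξ_eq_inr_ξ]
    exact Commute.map (show L₂.ξ * L₂.x₁ = L₂.x₁ * L₂.ξ from rfl) ι₂
  s_conj_y := by
    have h : L₁.ξ * L₁.x₂ * L₁.ξ⁻¹ = L₁.x₂⁻¹ := rfl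
    simp only [← map_mul, ← map_inv, h]

theorem amalgam_hom_ext {f g : Amalgam incl₁ incl₂ →* K} (ht : f (ι₁ L₁.t₁) = g (ι₁ L₁.t₁))
    (hx : f (ι₂ L₂.x₁) = g (ι₂ L₂.x₁)) (hy : f (ι₁ L₁.x₂) = g (ι₁ L₁.x₂))
    (hs : f (ι₁ L₁.ξ) = g (ι₁ L₁.ξ)) : f = g :=
  Amalgam.hom_ext (L₁.hom_ext ht hy hs)
    (L₂.hom_ext (by simpa [inl_t₁_eq_inr_t₁] using ht) hx (by simpa [inl_ξ_eq_inr_ξ] using hs))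

namespace SatisfiesRels

variable {t x y s : K} (h : SatisfiesRels t x y s)

/-- The homomorphism out of `L₁ *_L L₂` sending `t₁`, `x₁`, `x₂`, `ξ` to `t`, `x`, `y`, `s`. -/
def amalgamLift : Amalgam incl₁ incl₂ →* K :=
  Amalgam.lift (L₁.lift h.t_sq h.t_comm_y h.t_comm_s h.s_conj_y)
    (L₂.lift h.t_sq h.t_conj_x h.t_comm_s h.s_comm_x) (L.hom_ext (by simp) (by simp))

@[simp]
theorem amalgamLift_t₁ : h.amalgamLift (ι₁ L₁.t₁) = t := by simp [amalgamLift]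

@[simp]
theorem amalgamLift_x₁ : h.amalgamLift (ι₂ L₂.x₁) = x := by simp [amalgamLift]

@[simp]
theorem amalgamLift_x₂ : h.amalgamLift (ι₁ L₁.x₂) = y := by simp [amalgamLift]

@[simp]
theorem amalgamLift_ξ : h.amalgamLift (ι₁ L₁.ξ) = s := by simp [amalgamLift]

end SatisfiesRels

/-- The homomorphism from the presented group to `L₁ *_L L₂` respecting the named generators. -/
def toAmalgam : PresentedGroup rels →* Amalgam incl₁ incl₂ :=
  PresentedGroup.toGroup (f := ![ι₁ L₁.t₁, ι₂ L₂.x₁, ι₁ L₁.x₂, ι₁ L₁.ξ])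
    (forall_rels_lift_eq_one_iff.2 satisfiesRels_amalgam)

theorem toAmalgam_of (i : Fin 4) :
    toAmalgam (.of i) = ![ι₁ L₁.t₁, ι₂ L₂.x₁, ι₁ L₁.x₂, ι₁ L₁.ξ] i :=
  PresentedGroup.toGroup.of _

/-- The isomorphism between the presented group and `L₁ *_L L₂` respecting the named generators. -/
def presentedEquivAmalgam : PresentedGroup rels ≃* Amalgam incl₁ incl₂ :=
  MonoidHom.toMulEquiv toAmalgam satisfiesRels_of.amalgamLift
    (PresentedGroup.ext fun i => by fin_cases i <;> simp [toAmalgam_of])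
    (amalgam_hom_ext (by simp [toAmalgam_of]) (by simp [toAmalgam_of]) (by simp [toAmalgam_of])
      (by simp [toAmalgam_of]))

end Comparison

/-- the presented group is the amalgamated free product `L₁ *_L L₂` with
`L₁ ≅ ℤ/2ℤ × (ℤ ⋊ ℤ)`, `L₂ ≅ ℤ × D∞` and `L ≅ ℤ/2ℤ × ℤ` embedded in both factors. -/
theorem presented_iso_amalgam :
    ∃ j : ∀ b, L →* Fam L₁ L₂ b,
      (∀ b, Function.Injective (j b)) ∧
      Nonempty (PresentedGroup rels ≃* Monoid.PushoutI j) :=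
  ⟨famHom incl₁ incl₂, famHom_injective incl₁_injective incl₂_injective, ⟨presentedEquivAmalgam⟩⟩

end Stmt19
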